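/- Let G be a graph none of whose connected components is a path, and let ρ be a planar straight-line drawing of G such that the drawn segments of all edges are contained in the union of k lines in ℝ². Then the number of segments of the drawing ρ is at most k(k−1). -/

import Mathlib

/-!
Each class of aligned edges (a drawn segment) lies on one line `L` of the cover. If every edge
meeting the class also lay on `L`, the class would absorb all edges at its vertices, so its
component would be drawn inside `L`; a connected graph drawn planarly inside a line is a path
(`component_path`), which is excluded. Hence some vertex of the class is incident to an edge on
another line `L'` of the cover (`exists_pair`), and the class can be labelled by the ordered pair
`(L, L')`. The label determines the class: two classes with the same label pass through the same
vertex, the unique point of `L ∩ L'`, and two distinct edges of `L` at a common vertex are aligned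
because the drawing is planar (`mem_openSegment_of_adj`). So the number of classes is at most the
number `k * (k - 1)` of ordered pairs of distinct lines.
-/

open Set

variable {V : Type*}

/-- A planar straight-line drawing of a simple graph `G` in the plane `ℝ × ℝ`. -/
structure IsPlanarDrawing (G : SimpleGraph V) (ρ : V → ℝ × ℝ) : Prop where
  inj : Function.Injective ρ
  edge_inter : ∀ ⦃u v x y : V⦄, G.Adj u v → G.Adj x y → s(u, v) ≠ s(x, y) →
    ∀ p : ℝ × ℝ, p ∈ segment ℝ (ρ u) (ρ v) → p ∈ segment ℝ (ρ x) (ρ y) →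
      ∃ w : V, (w = u ∨ w = v) ∧ (w = x ∨ w = y) ∧ p = ρ w
  vertex_not_on_edge : ∀ ⦃u v w : V⦄, G.Adj u v → w ≠ u → w ≠ v →
    ρ w ∉ segment ℝ (ρ u) (ρ v)

/-- Two incident edges `e = {u,v}` and `f = {v,w}` are aligned in the drawing `ρ`
if the image of the shared vertex `v` lies strictly between the images of `u` and `w`. -/
def Aligned (G : SimpleGraph V) (ρ : V → ℝ × ℝ) (e f : Sym2 V) : Prop :=
  ∃ u v w : V, u ≠ w ∧ G.Adj u v ∧ G.Adj v w ∧ e = s(u, v) ∧ f = s(v, w) ∧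
    ρ v ∈ openSegment ℝ (ρ u) (ρ w)

/-- The number of (unordered) pairs of incident edges that are aligned in the drawing `ρ`. -/
noncomputable def numAlignedPairs (G : SimpleGraph V) (ρ : V → ℝ × ℝ) : ℕ :=
  Set.ncard {q : Sym2 (Sym2 V) | ∃ e f : Sym2 V, q = s(e, f) ∧ Aligned G ρ e f}

/-- The number of segments of the drawing `ρ`: the number of equivalence classes of edges
under the reflexive-transitive closure of the alignment relation. -/
noncomputable def numSegments (G : SimpleGraph V) (ρ : V → ℝ × ℝ) : ℕ :=
  Set.ncard {S : Set (Sym2 V) |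
    ∃ e ∈ G.edgeSet, S = {f | Relation.ReflTransGen (Aligned G ρ) e f}}

/-- The segment number of `G`: the minimum number of segments over all
planar straight-line drawings of `G`. -/
noncomputable def segNumber (G : SimpleGraph V) : ℕ :=
  sInf {n : ℕ | ∃ ρ : V → ℝ × ℝ, IsPlanarDrawing G ρ ∧ numSegments G ρ = n}

/-- A line in the plane. -/
def IsLine (L : Set (ℝ × ℝ)) : Prop :=
  ∃ a b : ℝ × ℝ, a ≠ b ∧ L = {p : ℝ × ℝ | ∃ t : ℝ, p = a + t • (b - a)}

/-- The line cover number of `G`: the minimum, over all planar straight-line drawings of `G`,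
of the minimum number of lines whose union contains the drawn segments of all edges. -/
noncomputable def linNumber (G : SimpleGraph V) : ℕ :=
  sInf {n : ℕ | ∃ ρ : V → ℝ × ℝ, IsPlanarDrawing G ρ ∧
    ∃ 𝓛 : Finset (Set (ℝ × ℝ)), 𝓛.card = n ∧ (∀ L ∈ 𝓛, IsLine L) ∧
      ∀ ⦃u v : V⦄, G.Adj u v → segment ℝ (ρ u) (ρ v) ⊆ ⋃ L ∈ 𝓛, L}

/-- The `k`-banana: vertices `a = Sum.inl false`, `b = Sum.inl true` (covering vertices) and
`c i = Sum.inr i` for `i : Fin k` (independent vertices); edges `{a, c i}` and `{c i, b}`. -/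
def banana (k : ℕ) : SimpleGraph (Bool ⊕ Fin k) :=
  SimpleGraph.fromRel fun x y =>
    ∃ i : Fin k, (x = Sum.inl false ∨ x = Sum.inl true) ∧ y = Sum.inr i

/-- A connected component of `G` is a path component if its induced subgraph is isomorphic
to a path graph with at least two vertices (i.e., at least one edge). -/
def IsPathComponent (G : SimpleGraph V) (c : G.ConnectedComponent) : Prop :=
  ∃ n : ℕ, 2 ≤ n ∧ Nonempty (G.induce c.supp ≃g SimpleGraph.pathGraph n)

/-! ### Lines in the plane -/

theorem IsLine.exists_param {L : Set (ℝ × ℝ)} (hL : IsLine L) :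
    ∃ a d : ℝ × ℝ, d ≠ 0 ∧ ∀ p, p ∈ L ↔ ∃ t : ℝ, p = a + t • d := by
  obtain ⟨a, b, hab, rfl⟩ := hL
  exact ⟨a, b - a, sub_ne_zero.mpr hab.symm, fun p => Iff.rfl⟩

theorem IsLine.mem_iff {L : Set (ℝ × ℝ)} (hL : IsLine L) {x y : ℝ × ℝ} (hx : x ∈ L) (hy : y ∈ L)
    (hxy : x ≠ y) (p : ℝ × ℝ) : p ∈ L ↔ ∃ t : ℝ, p = x + t • (y - x) := by
  obtain ⟨a, d, hd, hm⟩ := hL.exists_param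
  obtain ⟨s, rfl⟩ := (hm x).1 hx
  obtain ⟨r, rfl⟩ := (hm y).1 hy
  have hsr : r - s ≠ 0 := by
    intro h0
    exact hxy (by rw [sub_eq_zero.1 h0])
  rw [hm]
  constructor
  · rintro ⟨t, rfl⟩
    refine ⟨(t - s) / (r - s), ?_⟩
    have : a + s • d + ((t - s) / (r - s)) • (a + r • d - (a + s • d))
        = a + (s + (t - s) / (r - s) * (r - s)) • d := by module
    rw [this, div_mul_cancel₀ _ hsr]
    module
  · rintro ⟨t, rfl⟩
    exact ⟨s + t * (r - s), by module⟩

theorem IsLine.eq_of_two {L L' : Set (ℝ × ℝ)} (hL : IsLine L) (hL' : IsLine L') {x y : ℝ × ℝ}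
    (hx : x ∈ L) (hy : y ∈ L) (hx' : x ∈ L') (hy' : y ∈ L') (hxy : x ≠ y) : L = L' := by
  ext p
  rw [hL.mem_iff hx hy hxy, hL'.mem_iff hx' hy' hxy]

theorem mem_openSegment_param (a d : ℝ × ℝ) {s t r : ℝ} (h1 : s < t) (h2 : t < r) :
    a + t • d ∈ openSegment ℝ (a + s • d) (a + r • d) := by
  have hsr : r - s ≠ 0 := by linarith
  have hpos : 0 < r - s := by linarith
  refine ⟨(r - t) / (r - s), (t - s) / (r - s), div_pos (by linarith) hpos,
    div_pos (by linarith) hpos, by field_simp; ring, ?_⟩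
  have e1 : (r - t) / (r - s) + (t - s) / (r - s) = 1 := by field_simp; ring
  have e2 : (r - t) / (r - s) * s + (t - s) / (r - s) * r = t := by field_simp; ring
  have : ((r - t) / (r - s)) • (a + s • d) + ((t - s) / (r - s)) • (a + r • d)
      = ((r - t) / (r - s) + (t - s) / (r - s)) • a
        + ((r - t) / (r - s) * s + (t - s) / (r - s) * r) • d := by module
  rw [this, e1, e2, one_smul]

/-- A nondegenerate segment covered by finitely many lines has both endpoints on one of them:
by the pigeonhole principle two of its infinitely many points share a line. -/
theorem exists_line_of_cover (𝓛 : Finset (Set (ℝ × ℝ))) (hlines : ∀ L ∈ 𝓛, IsLine L)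
    {p q : ℝ × ℝ} (hpq : p ≠ q) (hc : segment ℝ p q ⊆ ⋃ L ∈ 𝓛, L) :
    ∃ L ∈ 𝓛, p ∈ L ∧ q ∈ L := by
  have hex : ∀ t : Icc (0 : ℝ) 1, ∃ L : 𝓛, p + (t : ℝ) • (q - p) ∈ (L : Set (ℝ × ℝ)) := by
    rintro ⟨t, ht⟩
    have hmem : p + t • (q - p) ∈ segment ℝ p q := by
      rw [segment_eq_image']
      exact ⟨t, ht, rfl⟩
    have := hc hmem
    simp only [mem_iUnion] at this
    obtain ⟨L, hL, hm⟩ := this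
    exact ⟨⟨L, hL⟩, hm⟩
  choose f hf using hex
  have : Infinite (Icc (0 : ℝ) 1) := (Icc_infinite one_pos).to_subtype
  obtain ⟨s, t, hst, he⟩ := Finite.exists_ne_map_eq_of_infinite f
  have hs := hf s
  have ht := hf t
  rw [← he] at ht
  have hL := hlines _ (f s).2
  have hst' : (t : ℝ) - s ≠ 0 := fun h0 => hst (Subtype.ext (sub_eq_zero.1 h0).symm)
  have hne : p + (s : ℝ) • (q - p) ≠ p + (t : ℝ) • (q - p) := by
    intro h0
    have h1 : ((t : ℝ) - s) • (q - p) = 0 := by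
      rw [sub_smul, sub_eq_zero]
      exact (add_left_cancel h0).symm
    rcases smul_eq_zero.1 h1 with h2 | h2
    · exact hst' h2
    · exact hpq (sub_eq_zero.1 h2).symm
  have key : ∀ r : ℝ, p + r • (q - p) ∈ (f s : Set (ℝ × ℝ)) := by
    intro r
    rw [hL.mem_iff hs ht hne]
    refine ⟨(r - s) / (t - s), ?_⟩
    have : p + (s : ℝ) • (q - p) + ((r - s) / ((t : ℝ) - s)) •
        (p + (t : ℝ) • (q - p) - (p + (s : ℝ) • (q - p)))
        = p + (s + (r - s) / ((t : ℝ) - s) * (t - s)) • (q - p) := by module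
    rw [this, div_mul_cancel₀ _ hst']
    module
  refine ⟨f s, (f s).2, ?_, ?_⟩
  · simpa using key 0
  · simpa using key 1

/-! ### Alignment classes -/

theorem Aligned.symm' {G : SimpleGraph V} {ρ : V → ℝ × ℝ} {e f : Sym2 V}
    (h : Aligned G ρ e f) : Aligned G ρ f e := by
  obtain ⟨u, v, w, huw, huv, hvw, rfl, rfl, hb⟩ := h
  exact ⟨w, v, u, huw.symm, hvw.symm, huv.symm, Sym2.eq_swap, Sym2.eq_swap,
    by rwa [openSegment_symm]⟩

theorem class_eq {G : SimpleGraph V} {ρ : V → ℝ × ℝ} {e f : Sym2 V}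
    (h : Relation.ReflTransGen (Aligned G ρ) e f) :
    {g | Relation.ReflTransGen (Aligned G ρ) e g}
      = {g | Relation.ReflTransGen (Aligned G ρ) f g} := by
  have : Std.Symm (Aligned G ρ) := ⟨fun _ _ hab => Aligned.symm' hab⟩
  have hs : Relation.ReflTransGen (Aligned G ρ) f e :=
    Relation.ReflTransGen.stdSymm.symm _ _ h
  ext g
  exact ⟨fun hg => hs.trans hg, fun hg => h.trans hg⟩

/-- Two edges at a common vertex drawn on the same line leave that vertex in opposite
directions; otherwise the shorter one would end in the interior of the longer one. -/
theorem mem_openSegment_of_adj {G : SimpleGraph V} {ρ : V → ℝ × ℝ} (h : IsPlanarDrawing G ρ)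
    {L : Set (ℝ × ℝ)} (hL : IsLine L) {u v w : V} (huv : G.Adj u v) (hvw : G.Adj v w)
    (huw : u ≠ w) (hu : ρ u ∈ L) (hv : ρ v ∈ L) (hw : ρ w ∈ L) :
    ρ v ∈ openSegment ℝ (ρ u) (ρ w) := by
  obtain ⟨a, d, hd, hm⟩ := hL.exists_param
  obtain ⟨s, hs⟩ := (hm _).1 hu
  obtain ⟨t, ht⟩ := (hm _).1 hv
  obtain ⟨r, hr⟩ := (hm _).1 hw
  have hst : s ≠ t := fun e => huv.ne (h.inj (by rw [hs, ht, e]))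
  have htr : t ≠ r := fun e => hvw.ne (h.inj (by rw [ht, hr, e]))
  have hsr : s ≠ r := fun e => huw (h.inj (by rw [hs, hr, e]))
  have n1 : ρ u ∉ openSegment ℝ (ρ v) (ρ w) := fun hh =>
    h.vertex_not_on_edge hvw huv.ne huw (openSegment_subset_segment _ _ _ hh)
  have n2 : ρ w ∉ openSegment ℝ (ρ u) (ρ v) := fun hh =>
    h.vertex_not_on_edge huv huw.symm hvw.ne.symm (openSegment_subset_segment _ _ _ hh)
  have n1' := n1
  have n2' := n2
  rw [openSegment_symm] at n1' n2'
  rw [hs, ht, hr] at *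
  rcases hst.lt_or_gt with h1 | h1 <;> rcases htr.lt_or_gt with h2 | h2 <;>
    rcases hsr.lt_or_gt with h3 | h3
  · exact mem_openSegment_param a d h1 h2
  · exact absurd h3 (by linarith)
  · exact absurd (mem_openSegment_param a d h3 h2) n2
  · exact absurd (mem_openSegment_param a d h3 h1) n1'
  · exact absurd (mem_openSegment_param a d h1 h3) n1
  · exact absurd (mem_openSegment_param a d h2 h3) n2'
  · exact absurd h3 (by linarith)
  · rw [openSegment_symm]; exact mem_openSegment_param a d h2 h1

/-- The line of an edge contains all edges of its class. -/
theorem class_edges {G : SimpleGraph V} {ρ : V → ℝ × ℝ} (h : IsPlanarDrawing G ρ)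
    {L : Set (ℝ × ℝ)} (hL : IsLine L) {e f : Sym2 V} (he : e ∈ G.edgeSet)
    (heL : ∀ v ∈ e, ρ v ∈ L) (hef : Relation.ReflTransGen (Aligned G ρ) e f) :
    f ∈ G.edgeSet ∧ ∀ v ∈ f, ρ v ∈ L := by
  induction hef with
  | refl => exact ⟨he, heL⟩
  | tail _ hbc ih =>
    obtain ⟨u, v, w, huw, huv, hvw, rfl, rfl, hb⟩ := hbc
    refine ⟨hvw, ?_⟩
    have hu := ih.2 u (Sym2.mem_mk_left _ _)
    have hv := ih.2 v (Sym2.mem_mk_right _ _)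
    have hw : ρ w ∈ L := by
      rw [hL.mem_iff hu hv (h.inj.ne huv.ne)]
      obtain ⟨α, β, hα, hβ, hαβ, hb⟩ := hb
      refine ⟨1 / β, ?_⟩
      have hα' : α = 1 - β := by linarith
      have e1 : ρ v - ρ u = β • (ρ w - ρ u) := by rw [← hb, hα']; module
      rw [e1, smul_smul, one_div, inv_mul_cancel₀ hβ.ne', one_smul]
      abel
    intro x hx
    rcases Sym2.mem_iff.1 hx with rfl | rfl
    · exact hv
    · exact hw

/-- Two edges through a common vertex and drawn on the same line belong to one class. -/
theorem reflTransGen_of_common {G : SimpleGraph V} {ρ : V → ℝ × ℝ} (h : IsPlanarDrawing G ρ)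
    {L : Set (ℝ × ℝ)} (hL : IsLine L) {e f : Sym2 V} (he : e ∈ G.edgeSet) (hf : f ∈ G.edgeSet)
    (heL : ∀ v ∈ e, ρ v ∈ L) (hfL : ∀ v ∈ f, ρ v ∈ L) {v : V} (hve : v ∈ e) (hvf : v ∈ f) :
    Relation.ReflTransGen (Aligned G ρ) e f := by
  obtain ⟨u, rfl⟩ := Sym2.mem_iff_exists.1 hve
  obtain ⟨w, rfl⟩ := Sym2.mem_iff_exists.1 hvf
  by_cases huw : u = w
  · rw [huw]
  · exact Relation.ReflTransGen.single ⟨u, v, w, huw, (G.mem_edgeSet.1 he).symm, hf,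
      Sym2.eq_swap, rfl, mem_openSegment_of_adj h hL (G.mem_edgeSet.1 he).symm hf huw
        (heL u (Sym2.mem_mk_right _ _)) (heL v hve) (hfL w (Sym2.mem_mk_right _ _))⟩

/-! ### Components drawn inside a line -/

/-- A component drawn inside a line is a path: in the order of its vertices along the line,
an edge joins neighbours since it passes through no other vertex, and neighbours are joined
by an edge since the component is connected. -/
theorem component_path [Fintype V] {G : SimpleGraph V} {ρ : V → ℝ × ℝ}
    (h : IsPlanarDrawing G ρ) {L : Set (ℝ × ℝ)} (hL : IsLine L) (c : G.ConnectedComponent)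
    (hc : ∀ v ∈ c.supp, ρ v ∈ L) :
    ∃ n : ℕ, Nonempty (G.induce c.supp ≃g SimpleGraph.pathGraph n) := by
  classical
  obtain ⟨a, d, hd, hm⟩ := hL.exists_param
  have hex : ∀ v : c.supp, ∃ t : ℝ, ρ v = a + t • d := fun v => (hm _).1 (hc v v.2)
  choose τ hτ using hex
  have hinj : Function.Injective τ := fun x y hxy =>
    Subtype.ext (h.inj (by rw [hτ, hτ, hxy]))
  let _ : LinearOrder c.supp := LinearOrder.lift' τ hinj
  have hlt : ∀ x y : c.supp, x < y ↔ τ x < τ y := fun x y => Iff.rfl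
  have hno : ∀ x y z : c.supp, G.Adj x y → x < z → z < y → False := by
    intro x y z hxy h1 h2
    refine h.vertex_not_on_edge hxy (w := z) (fun e => h1.ne (Subtype.ext e.symm))
      (fun e => h2.ne (Subtype.ext e)) (openSegment_subset_segment _ _ _ ?_)
    rw [hτ, hτ, hτ]
    exact mem_openSegment_param a d h1 h2
  have hcov : ∀ x y : c.supp, x ⋖ y → G.Adj x y := by
    intro x y hxy
    have hconn : (G.induce c.supp).Connected := c.connected_toSimpleGraph
    obtain ⟨p⟩ := hconn.preconnected x y
    -- a walk from `x` to `y` contains an edge leaving the initial segment of vertices up to `x`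
    obtain ⟨e, he, h1, h2⟩ := p.exists_boundary_dart (Set.Iic x) self_mem_Iic
      (fun hy => absurd hxy.lt (not_lt.2 hy))
    have hadj : G.Adj e.fst e.snd := e.adj
    have h1' : e.fst ≤ x := h1
    have h2' : x < e.snd := not_le.1 h2
    have e1 : e.fst = x := by
      by_contra hne
      exact hno _ _ x hadj (lt_of_le_of_ne h1' hne) h2'
    have e2 : e.snd = y := by
      have hy : y ≤ e.snd := not_lt.1 fun hlt' => hxy.2 h2' hlt'
      by_contra hne
      exact hno _ _ y hadj (h1'.trans_lt hxy.lt) (lt_of_le_of_ne hy (Ne.symm hne))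
    rwa [e1, e2] at hadj
  refine ⟨Fintype.card c.supp, ⟨⟨(Fintype.orderIsoFinOfCardEq c.supp rfl).symm.toEquiv, ?_⟩⟩⟩
  intro x y
  simp only [SimpleGraph.pathGraph, SimpleGraph.hasse_adj, OrderIso.toEquiv_symm,
    SimpleGraph.comap_adj]
  have hiff : ∀ x y : c.supp,
      ((Fintype.orderIsoFinOfCardEq c.supp rfl).symm x ⋖
        (Fintype.orderIsoFinOfCardEq c.supp rfl).symm y) ↔ x ⋖ y :=
    fun x y => apply_covBy_apply_iff _
  refine Iff.trans (or_congr (hiff x y) (hiff y x)) ?_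
  constructor
  · rintro (hxy | hxy)
    · exact hcov _ _ hxy
    · exact (hcov _ _ hxy).symm
  · intro hxy
    have hxy' : G.Adj x y := hxy
    have hne : x ≠ y := fun e => hxy'.ne (by rw [e])
    rcases lt_or_gt_of_ne hne with hl | hl
    · exact Or.inl ⟨hl, fun z h1 h2 => hno _ _ z hxy' h1 h2⟩
    · exact Or.inr ⟨hl, fun z h1 h2 => hno _ _ z hxy'.symm h1 h2⟩

/-- An edge lies on a line `L` of the cover, and some vertex of its class lies on a different
line `L'` of the cover: otherwise the component of the edge would lie in `L` and be a path. -/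
theorem exists_pair [Fintype V] {G : SimpleGraph V}
    (hpath : ∀ c : G.ConnectedComponent, ∀ n : ℕ,
      IsEmpty (G.induce c.supp ≃g SimpleGraph.pathGraph n))
    {ρ : V → ℝ × ℝ} (h : IsPlanarDrawing G ρ) (𝓛 : Finset (Set (ℝ × ℝ)))
    (hlines : ∀ L ∈ 𝓛, IsLine L)
    (hcover : ∀ ⦃u v : V⦄, G.Adj u v → segment ℝ (ρ u) (ρ v) ⊆ ⋃ L ∈ 𝓛, L)
    {e : Sym2 V} (he : e ∈ G.edgeSet) :
    ∃ L ∈ 𝓛, ∃ L' ∈ 𝓛, L ≠ L' ∧ (∀ v ∈ e, ρ v ∈ L) ∧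
      ∃ f, Relation.ReflTransGen (Aligned G ρ) e f ∧ ∃ v ∈ f, ρ v ∈ L' := by
  have hline : ∀ {u v : V}, G.Adj u v → ∃ L ∈ 𝓛, ρ u ∈ L ∧ ρ v ∈ L := fun huv =>
    exists_line_of_cover 𝓛 hlines (h.inj.ne huv.ne) (hcover huv)
  obtain ⟨L, hL, heL⟩ : ∃ L ∈ 𝓛, ∀ v ∈ e, ρ v ∈ L := by
    induction e with
    | _ u v =>
      obtain ⟨L, hL, hu, hv⟩ := hline he
      refine ⟨L, hL, fun x hx => ?_⟩
      rcases Sym2.mem_iff.1 hx with rfl | rfl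
      · exact hu
      · exact hv
  have hLl := hlines L hL
  by_contra hcon
  have hclosed : ∀ f, Relation.ReflTransGen (Aligned G ρ) e f → ∀ v ∈ f, ∀ w, G.Adj v w →
      ρ w ∈ L := by
    intro f hf v hv w hvw
    by_contra hw
    obtain ⟨L', hL', hv', hw'⟩ := hline hvw
    exact hcon ⟨L, hL, L', hL', fun e => hw (e ▸ hw'), heL, f, hf, v, hv, hv'⟩
  obtain ⟨v₀, hv₀⟩ : ∃ v, v ∈ e := ⟨_, Sym2.out_fst_mem e⟩
  have hreach : ∀ x, G.Reachable v₀ x →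
      ∃ f, Relation.ReflTransGen (Aligned G ρ) e f ∧ x ∈ f := by
    intro x hx
    rw [SimpleGraph.reachable_iff_reflTransGen] at hx
    induction hx with
    | refl => exact ⟨e, .refl, hv₀⟩
    | @tail y z _ hyz ih =>
      obtain ⟨f, hf, hy⟩ := ih
      obtain ⟨hfe, hfL⟩ := class_edges h hLl he heL hf
      refine ⟨s(y, z), hf.trans (reflTransGen_of_common h hLl hfe hyz hfL ?_ hy
        (Sym2.mem_mk_left _ _)), Sym2.mem_mk_right _ _⟩
      intro x hx
      rcases Sym2.mem_iff.1 hx with rfl | rfl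
      · exact hfL _ hy
      · exact hclosed f hf y hy _ hyz
  obtain ⟨n, ⟨φ⟩⟩ := component_path h hLl (G.connectedComponentMk v₀) (by
    intro v hv
    obtain ⟨f, hf, hvf⟩ := hreach v (SimpleGraph.ConnectedComponent.exact hv).symm
    exact (class_edges h hLl he heL hf).2 v hvf)
  exact (hpath _ n).false φ

/-- if no connected component of `G` is a path and `ρ` is a planar straight-line
drawing of `G` whose drawn edges are contained in the union of `k` lines, then the drawing `ρ`
has at most `k(k−1)` segments. -/
theorem numSegments_le_of_line_cover {V : Type*} [Fintype V] (G : SimpleGraph V)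
    (hpath : ∀ c : G.ConnectedComponent, ∀ n : ℕ,
      IsEmpty (G.induce c.supp ≃g SimpleGraph.pathGraph n))
    (ρ : V → ℝ × ℝ) (h : IsPlanarDrawing G ρ) (k : ℕ) (𝓛 : Finset (Set (ℝ × ℝ)))
    (hcard : 𝓛.card = k) (hlines : ∀ L ∈ 𝓛, IsLine L)
    (hcover : ∀ ⦃u v : V⦄, G.Adj u v → segment ℝ (ρ u) (ρ v) ⊆ ⋃ L ∈ 𝓛, L) :
    numSegments G ρ ≤ k * (k - 1) := by
  classical
  have key : ∀ S ∈ {S : Set (Sym2 V) |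
      ∃ e ∈ G.edgeSet, S = {f | Relation.ReflTransGen (Aligned G ρ) e f}},
      ∃ q : Set (ℝ × ℝ) × Set (ℝ × ℝ), q ∈ 𝓛.offDiag ∧
        ∃ f ∈ G.edgeSet, S = {g | Relation.ReflTransGen (Aligned G ρ) f g} ∧
          (∀ v ∈ f, ρ v ∈ q.1) ∧ ∃ v ∈ f, ρ v ∈ q.2 := by
    rintro S ⟨e, he, rfl⟩
    obtain ⟨L, hL, L', hL', hne, heL, f, hf, v, hv, hv'⟩ :=
      exists_pair hpath h 𝓛 hlines hcover he
    obtain ⟨hfe, hfL⟩ := class_edges h (hlines L hL) he heL hf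
    exact ⟨(L, L'), by simp [hL, hL', hne], f, hfe, class_eq hf, hfL, v, hv, hv'⟩
  choose! q hq using key
  have hoff : (𝓛.offDiag : Set (Set (ℝ × ℝ) × Set (ℝ × ℝ))).ncard = k * (k - 1) := by
    rw [Set.ncard_coe_finset, Finset.offDiag_card, hcard, Nat.mul_sub, mul_one]
  rw [numSegments, ← hoff]
  refine Set.ncard_le_ncard_of_injOn q (fun S hS => (hq S hS).1) ?_ (Finset.finite_toSet _)
  intro S hS T hT hST
  obtain ⟨hoS, f, hf, hSf, hfL, v, hv, hv'⟩ := hq S hS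
  obtain ⟨-, g, hg, hTg, hgL, w, hw, hw'⟩ := hq T hT
  rw [← hST] at hgL hw'
  rw [Finset.mem_offDiag] at hoS
  have hvw : v = w := by
    by_contra hne
    exact hoS.2.2 ((hlines _ hoS.1).eq_of_two (hlines _ hoS.2.1) (hfL v hv) (hgL w hw) hv' hw'
      (h.inj.ne hne))
  subst hvw
  rw [hSf, hTg]
  exact class_eq (reflTransGen_of_common h (hlines _ hoS.1) hf hg hfL hgL hv hw)
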